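/- Let a > 0, ε ∈ ℝ, m₀ a nonzero integer, Y : [−1, 1] → ℂ twice continuously differentiable, and let u be the separated field of zonal wavenumber m₀ with profile Y; write u¹ = Re u, u² = Im u. Let Z : [−1, 1] → ℂ be continuously differentiable, let v be the separated field of zonal wavenumber 2m₀ with profile Z, and write w¹ = Re v, w² = Im v. Then for j = 1, 2: G(u¹, u¹, wʲ) = −G(u², u², wʲ) and G(u¹, u², wʲ) = G(u², u¹, wʲ), where G(u, v, w) = −ε ∫_Ω ((u·∇)v)·conj(w) dx dy. -/

import Mathlib

open Complex

/-- Partial derivative in `x`. -/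
noncomputable def pdx (f : ℝ → ℝ → ℂ) : ℝ → ℝ → ℂ :=
  fun x y => deriv (fun t => f t y) x

/-- Partial derivative in `y`. -/
noncomputable def pdy (f : ℝ → ℝ → ℂ) : ℝ → ℝ → ℂ :=
  fun x y => deriv (fun t => f x t) y

/-- First component of a complex vector field. -/
def c1 (u : ℝ → ℝ → ℂ × ℂ) : ℝ → ℝ → ℂ := fun x y => (u x y).1

/-- Second component of a complex vector field. -/
def c2 (u : ℝ → ℝ → ℂ × ℂ) : ℝ → ℝ → ℂ := fun x y => (u x y).2

/-- The trilinear form `G(u,v,w) = -ε ∫_Ω ((u·∇)v)·conj(w) dx dy` over the channel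
`Ω = (0, 2/a) × (-1, 1)`. -/
noncomputable def trilinG (a ε : ℝ) (u v w : ℝ → ℝ → ℂ × ℂ) : ℂ :=
  -(ε : ℂ) * ∫ x in (0 : ℝ)..(2 / a), ∫ y in (-1 : ℝ)..1,
    ((c1 u x y * pdx (c1 v) x y + c2 u x y * pdy (c1 v) x y) * (starRingEnd ℂ) (c1 w x y)
      + (c1 u x y * pdx (c2 v) x y + c2 u x y * pdy (c2 v) x y) * (starRingEnd ℂ) (c2 w x y))

/-- The separated field of zonal wavenumber `p` with profile `Y`:
`u = (∂ψ/∂y, -∂ψ/∂x)` where `ψ(x,y) = e^{i a p π x} Y(y)`. -/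
noncomputable def sepField (a : ℝ) (p : ℤ) (Y : ℝ → ℂ) : ℝ → ℝ → ℂ × ℂ :=
  fun x y =>
    (pdy (fun (x y : ℝ) =>
        Complex.exp (Complex.I * ((a * p * Real.pi : ℝ) : ℂ) * ((x : ℝ) : ℂ)) * Y y) x y,
     -pdx (fun (x y : ℝ) =>
        Complex.exp (Complex.I * ((a * p * Real.pi : ℝ) : ℂ) * ((x : ℝ) : ℂ)) * Y y) x y)

/-- Real part of a complex vector field, viewed again as a complex vector field. -/
noncomputable def reField (u : ℝ → ℝ → ℂ × ℂ) : ℝ → ℝ → ℂ × ℂ :=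
  fun x y => (((u x y).1.re : ℂ), ((u x y).2.re : ℂ))

/-- Imaginary part of a complex vector field, viewed again as a complex vector field. -/
noncomputable def imField (u : ℝ → ℝ → ℂ × ℂ) : ℝ → ℝ → ℂ × ℂ :=
  fun x y => (((u x y).1.im : ℂ), ((u x y).2.im : ℂ))

/-!
Translation by a quarter of the wavelength of `u` multiplies `u` by `i`, so it sends `u¹` to `-u²`
and `u²` to `u¹`; being half a wavelength of the field `v` of doubled wavenumber, it negates
`w¹` and `w²`. All these fields have the period `2 / a` of the channel, so `G` is invariant under
the translation, and the identities are the invariance of `G(u¹, u¹, wʲ)` and `G(u¹, u², wʲ)`.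
-/

section PartialDerivatives

variable (c : ℂ) (f : ℝ → ℝ → ℂ)

lemma pdx_comp_add_right (s x : ℝ) : pdx (fun x => f (x + s)) x = pdx f (x + s) :=
  funext fun y => deriv_comp_add_const (fun t => f t y) s x

lemma pdx_smul : pdx (c • f) = c • pdx f :=
  funext₂ fun x y => deriv_const_mul_field (u := c) (v := fun t => f t y) (x := x)

lemma pdy_smul : pdy (c • f) = c • pdy f :=
  funext₂ fun x y => deriv_const_mul_field (u := c) (v := fun t => f x t) (x := y)

end PartialDerivatives

section TrilinearForm

/-- The integrand `((u·∇)v)·conj(w)` of the trilinear form `G`. -/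
noncomputable def trilinDensity (u v w : ℝ → ℝ → ℂ × ℂ) : ℝ → ℝ → ℂ := fun x y =>
  (c1 u x y * pdx (c1 v) x y + c2 u x y * pdy (c1 v) x y) * (starRingEnd ℂ) (c1 w x y)
    + (c1 u x y * pdx (c2 v) x y + c2 u x y * pdy (c2 v) x y) * (starRingEnd ℂ) (c2 w x y)

variable (a ε : ℝ) (c : ℂ) (u v w : ℝ → ℝ → ℂ × ℂ)

lemma trilinG_eq_integral_trilinDensity :
    trilinG a ε u v w =
      -(ε : ℂ) * ∫ x in (0 : ℝ)..(2 / a), ∫ y in (-1 : ℝ)..1, trilinDensity u v w x y :=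
  rfl

lemma c1_smul : c1 (c • u) = c • c1 u := rfl

lemma c2_smul : c2 (c • u) = c • c2 u := rfl

lemma trilinDensity_smul_left (x y : ℝ) :
    trilinDensity (c • u) v w x y = c * trilinDensity u v w x y := by
  simp only [trilinDensity, c1_smul, c2_smul, Pi.smul_apply, smul_eq_mul]
  ring

lemma trilinDensity_smul_middle (x y : ℝ) :
    trilinDensity u (c • v) w x y = c * trilinDensity u v w x y := by
  simp only [trilinDensity, c1_smul, c2_smul, pdx_smul, pdy_smul, Pi.smul_apply, smul_eq_mul]
  ring

lemma trilinDensity_smul_right (x y : ℝ) :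
    trilinDensity u v (c • w) x y = (starRingEnd ℂ) c * trilinDensity u v w x y := by
  simp only [trilinDensity, c1_smul, c2_smul, Pi.smul_apply, smul_eq_mul, map_mul]
  ring

lemma trilinG_smul_left : trilinG a ε (c • u) v w = c * trilinG a ε u v w := by
  simp only [trilinG_eq_integral_trilinDensity, trilinDensity_smul_left,
    intervalIntegral.integral_const_mul, mul_left_comm]

lemma trilinG_smul_middle : trilinG a ε u (c • v) w = c * trilinG a ε u v w := by
  simp only [trilinG_eq_integral_trilinDensity, trilinDensity_smul_middle,
    intervalIntegral.integral_const_mul, mul_left_comm]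

lemma trilinG_smul_right :
    trilinG a ε u v (c • w) = (starRingEnd ℂ) c * trilinG a ε u v w := by
  simp only [trilinG_eq_integral_trilinDensity, trilinDensity_smul_right,
    intervalIntegral.integral_const_mul, mul_left_comm]

lemma trilinG_neg_left : trilinG a ε (-u) v w = -trilinG a ε u v w := by
  simpa only [neg_one_smul, neg_one_mul] using trilinG_smul_left a ε (-1) u v w

lemma trilinG_neg_middle : trilinG a ε u (-v) w = -trilinG a ε u v w := by
  simpa only [neg_one_smul, neg_one_mul] using trilinG_smul_middle a ε (-1) u v w

lemma trilinG_neg_right : trilinG a ε u v (-w) = -trilinG a ε u v w := by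
  simpa only [neg_one_smul, neg_one_mul, map_neg, map_one] using
    trilinG_smul_right a ε (-1) u v w

lemma trilinDensity_comp_add_right (s x : ℝ) :
    trilinDensity (fun x => u (x + s)) (fun x => v (x + s)) (fun x => w (x + s)) x
      = trilinDensity u v w (x + s) := by
  have pdx_c1 : pdx (c1 fun x => v (x + s)) x = pdx (c1 v) (x + s) :=
    pdx_comp_add_right (c1 v) s x
  have pdx_c2 : pdx (c2 fun x => v (x + s)) x = pdx (c2 v) (x + s) :=
    pdx_comp_add_right (c2 v) s x
  funext y
  simp only [trilinDensity, pdx_c1, pdx_c2]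
  rfl

variable {a u v w}

lemma trilinDensity_periodic {T : ℝ} (hu : Function.Periodic u T) (hv : Function.Periodic v T)
    (hw : Function.Periodic w T) : Function.Periodic (trilinDensity u v w) T := fun x => by
  rw [← trilinDensity_comp_add_right, funext hu, funext hv, funext hw]

lemma trilinG_comp_add_right (hu : Function.Periodic u (2 / a))
    (hv : Function.Periodic v (2 / a)) (hw : Function.Periodic w (2 / a)) (s : ℝ) :
    trilinG a ε (fun x => u (x + s)) (fun x => v (x + s)) (fun x => w (x + s))
      = trilinG a ε u v w := by
  let F : ℝ → ℂ := fun x => ∫ y in (-1 : ℝ)..1, trilinDensity u v w x y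
  have F_periodic : Function.Periodic F (2 / a) :=
    (trilinDensity_periodic hu hv hw).comp fun d => ∫ y in (-1 : ℝ)..1, d y
  have integral_shift : ∫ x in (0 : ℝ)..(2 / a), F (x + s) = ∫ x in (0 : ℝ)..(2 / a), F x := by
    rw [intervalIntegral.integral_comp_add_right, zero_add, add_comm (2 / a),
      F_periodic.intervalIntegral_add_eq s 0, zero_add]
  simp only [trilinG_eq_integral_trilinDensity, trilinDensity_comp_add_right]
  exact congrArg (-(ε : ℂ) * ·) integral_shift

end TrilinearForm

section RealAndImaginaryParts

variable {u v w : ℝ → ℝ → ℂ × ℂ} {T : ℝ}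

lemma reField_periodic (hu : Function.Periodic u T) : Function.Periodic (reField u) T :=
  fun x => funext fun y => by simp only [reField, hu x]

lemma imField_periodic (hu : Function.Periodic u T) : Function.Periodic (imField u) T :=
  fun x => funext fun y => by simp only [imField, hu x]

lemma reField_antiperiodic (hu : Function.Antiperiodic u T) :
    Function.Antiperiodic (reField u) T := fun x => by
  ext y <;> simp [reField, hu x]

lemma imField_antiperiodic (hu : Function.Antiperiodic u T) :
    Function.Antiperiodic (imField u) T := fun x => by
  ext y <;> simp [imField, hu x]

lemma reField_add_of_rotation (hu : ∀ x, u (x + T) = I • u x) :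
    (fun x => reField u (x + T)) = -imField u := by
  ext x y <;> simp [reField, imField, hu x]

lemma imField_add_of_rotation (hu : ∀ x, u (x + T) = I • u x) :
    (fun x => imField u (x + T)) = reField u := by
  ext x y <;> simp [reField, imField, hu x]

variable {a s : ℝ} (ε : ℝ)
  (hu : Function.Periodic u (2 / a)) (hv : Function.Periodic v (2 / a))
  (hw : Function.Periodic w (2 / a)) (hus : ∀ x, u (x + s) = I • u x)
  (hvs : ∀ x, v (x + s) = I • v x) (hws : Function.Antiperiodic w s)

include hu hv hw hus hvs hws

lemma trilinG_reField_reField_of_rotation :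
    trilinG a ε (reField u) (reField v) w = -trilinG a ε (imField u) (imField v) w := by
  rw [← trilinG_comp_add_right ε (reField_periodic hu) (reField_periodic hv) hw s,
    reField_add_of_rotation hus, reField_add_of_rotation hvs,
    show (fun x => w (x + s)) = -w from funext hws,
    trilinG_neg_left, trilinG_neg_middle, trilinG_neg_right, neg_neg]

lemma trilinG_reField_imField_of_rotation :
    trilinG a ε (reField u) (imField v) w = trilinG a ε (imField u) (reField v) w := by
  rw [← trilinG_comp_add_right ε (reField_periodic hu) (imField_periodic hv) hw s,
    reField_add_of_rotation hus, imField_add_of_rotation hvs,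
    show (fun x => w (x + s)) = -w from funext hws,
    trilinG_neg_left, trilinG_neg_right, neg_neg]

end RealAndImaginaryParts

section SeparatedFields

/-- The stream function `ψ(x, y) = e^{i a p π x} Y(y)` of the separated field `sepField a p Y`,
written so that `sepField a p Y` is definitionally `(∂ψ/∂y, -∂ψ/∂x)`. -/
noncomputable def sepStream (a : ℝ) (p : ℤ) (Y : ℝ → ℂ) : ℝ → ℝ → ℂ := fun x y =>
  exp (I * ((a * p * Real.pi : ℝ) : ℂ) * (x : ℂ)) * Y y

variable {a : ℝ} {p : ℤ} (Y : ℝ → ℂ)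

lemma sepField_eq (a : ℝ) (p : ℤ) :
    sepField a p Y = fun x y => (pdy (sepStream a p Y) x y, -pdx (sepStream a p Y) x y) :=
  rfl

lemma sepStream_add (a : ℝ) (p : ℤ) (s : ℝ) :
    (fun x => sepStream a p Y (x + s))
      = exp (I * ((a * p * Real.pi : ℝ) : ℂ) * (s : ℂ)) • sepStream a p Y := by
  ext x y
  simp only [sepStream, Pi.smul_apply, smul_eq_mul, ofReal_add, mul_add, exp_add]
  ring

lemma sepField_add (a : ℝ) (p : ℤ) (s x : ℝ) :
    sepField a p Y (x + s)
      = exp (I * ((a * p * Real.pi : ℝ) : ℂ) * (s : ℂ)) • sepField a p Y x := by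
  have pdy_add : pdy (sepStream a p Y) (x + s)
      = pdy (fun x => sepStream a p Y (x + s)) x := rfl
  rw [sepField_eq]
  simp only [pdy_add, ← pdx_comp_add_right, sepStream_add, pdx_smul, pdy_smul]
  ext y <;> simp

lemma sepField_periodic (ha : a ≠ 0) (p : ℤ) : Function.Periodic (sepField a p Y) (2 / a) := by
  intro x
  have phase : I * ((a * p * Real.pi : ℝ) : ℂ) * ((2 / a : ℝ) : ℂ)
      = p * (2 * Real.pi * I) := by
    have : (a : ℂ) ≠ 0 := ofReal_ne_zero.mpr ha
    push_cast
    field_simp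
  rw [sepField_add, phase, exp_int_mul_two_pi_mul_I, one_smul]

lemma sepField_add_quarter_wavelength (ha : a ≠ 0) (hp : p ≠ 0) (x : ℝ) :
    sepField a p Y (x + 1 / (2 * a * p)) = I • sepField a p Y x := by
  have phase : I * ((a * p * Real.pi : ℝ) : ℂ) * ((1 / (2 * a * p) : ℝ) : ℂ)
      = Real.pi / 2 * I := by
    have : (a : ℂ) ≠ 0 := ofReal_ne_zero.mpr ha
    have : (p : ℂ) ≠ 0 := Int.cast_ne_zero.mpr hp
    push_cast
    field_simp
  rw [sepField_add, phase, exp_pi_div_two_mul_I]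

lemma sepField_antiperiodic_half_wavelength (ha : a ≠ 0) (hp : p ≠ 0) :
    Function.Antiperiodic (sepField a p Y) (1 / (a * p)) := by
  intro x
  have phase : I * ((a * p * Real.pi : ℝ) : ℂ) * ((1 / (a * p) : ℝ) : ℂ) = Real.pi * I := by
    have : (a : ℂ) ≠ 0 := ofReal_ne_zero.mpr ha
    have : (p : ℂ) ≠ 0 := Int.cast_ne_zero.mpr hp
    push_cast
    field_simp
  rw [sepField_add, phase, exp_pi_mul_I, neg_one_smul]

end SeparatedFields

/-- Interaction symmetries of the real/imaginary parts `u¹, u²` of a separated field of nonzero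
zonal wavenumber `m₀` with the real/imaginary parts `w¹, w²` of a separated field of
wavenumber `2m₀`: for `j = 1, 2`, `G(u¹,u¹,wʲ) = -G(u²,u²,wʲ)` and
`G(u¹,u²,wʲ) = G(u²,u¹,wʲ)`. -/
theorem double_wavenumber_interaction_symmetries (a ε : ℝ) (ha : 0 < a)
    (m₀ : ℤ) (hm₀ : m₀ ≠ 0)
    (Y : ℝ → ℂ) (hY : ContDiff ℝ 2 Y)
    (Z : ℝ → ℂ) (hZ : ContDiff ℝ 1 Z)
    (u1 u2 w1 w2 : ℝ → ℝ → ℂ × ℂ)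
    (hu1 : u1 = reField (sepField a m₀ Y))
    (hu2 : u2 = imField (sepField a m₀ Y))
    (hw1 : w1 = reField (sepField a (2 * m₀) Z))
    (hw2 : w2 = imField (sepField a (2 * m₀) Z)) :
    (trilinG a ε u1 u1 w1 = -trilinG a ε u2 u2 w1 ∧
      trilinG a ε u1 u2 w1 = trilinG a ε u2 u1 w1) ∧
    (trilinG a ε u1 u1 w2 = -trilinG a ε u2 u2 w2 ∧
      trilinG a ε u1 u2 w2 = trilinG a ε u2 u1 w2) := by
  subst hu1 hu2 hw1 hw2
  let u := sepField a m₀ Y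
  have u_periodic := sepField_periodic Y ha.ne' m₀
  have v_periodic := sepField_periodic Z ha.ne' (2 * m₀)
  have u_rotation := sepField_add_quarter_wavelength Y ha.ne' hm₀
  have v_antiperiodic : Function.Antiperiodic (sepField a (2 * m₀) Z) (1 / (2 * a * m₀)) := by
    have half_eq_quarter : 1 / (a * ((2 * m₀ : ℤ) : ℝ)) = 1 / (2 * a * m₀) := by
      push_cast
      ring
    rw [← half_eq_quarter]
    exact sepField_antiperiodic_half_wavelength Z ha.ne' (mul_ne_zero two_ne_zero hm₀)
  have symmetries {w : ℝ → ℝ → ℂ × ℂ} (hw : Function.Periodic w (2 / a))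
      (hws : Function.Antiperiodic w (1 / (2 * a * m₀))) :
      trilinG a ε (reField u) (reField u) w = -trilinG a ε (imField u) (imField u) w ∧
        trilinG a ε (reField u) (imField u) w = trilinG a ε (imField u) (reField u) w :=
    ⟨trilinG_reField_reField_of_rotation ε u_periodic u_periodic hw u_rotation u_rotation hws,
      trilinG_reField_imField_of_rotation ε u_periodic u_periodic hw u_rotation u_rotation hws⟩
  exact ⟨symmetries (reField_periodic v_periodic) (reField_antiperiodic v_antiperiodic),
    symmetries (imField_periodic v_periodic) (imField_antiperiodic v_antiperiodic)⟩
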